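/- **Language.** Let $\mathcal C$ be a set of nominal constants and $\mathcal P$ a set of predicate constants with arities. Formulae are built from atomic formulae $\varphi o_1\dots o_n$ and (primitive) negative predications $-\varphi o_1\dots o_n$ ($o_i$ nominal constants or variables) and $\bot$ by $\&,\vee,\supset,\forall,\exists$. For finite $Q\subseteq\mathcal P$, $o_1 \overset{+}{=}_Q o_2$ abbreviates the conjunction over $\varphi\in Q$ of the formulae $\forall z_1\dots\forall z_n\bigwedge_j(\varphi z_1..o_1..z_n\leftrightarrow\varphi z_1..o_2..z_n)$ ($o_1$, $o_2$ at place $j$; an empty conjunction is $\bot\supset\bot$), and $o_1\overset{-}{=}_Q o_2$ the same with $-\varphi$ for $\varphi$. For atomic formulae $\varphi(x),\psi(x)$ containing $x$, $\psi(\iota_Q x\varphi(x))$ abbreviates $\exists x\varphi(x)\ \&\ \forall u\forall v((\varphi(u)\&\varphi(v))\supset u\overset{+}{=}_Q v)\ \&\ \forall w(\varphi(w)\supset\psi(w))$, and $\psi(\iota_Q x{-}\varphi(x))$ the same with $-\varphi$ for $\varphi$ and $\overset{-}{=}_Q$ for $\overset{+}{=}_Q$; likewise with $-\psi$ for $\psi$.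 **System.** A subatomic base assigns to each $\tau\in\mathcal C\cup\mathcal P$ a set $\tau\Gamma$ of atomic sentences containing $\tau$. Derivations are (well-founded) trees whose leaves are labelled assumptions of formulae or term assumptions $\tau\Gamma$, built by: (i) the natural deduction rules for $\&,\vee,\supset,\forall,\exists$ and $\bot$i (from $\bot$ infer any formula), where the minor premisses and the conclusion of $\vee$E and $\exists$E may be term assumptions, and $\forall$I infers $\forall xA$ either from one premiss $A(x/o)$, with $o$ a variable or nominal constant, or from the premisses $A(x/\alpha)$ for all $\alpha\in\mathcal C$; in one-premiss $\forall$I and in $\exists$E the term $o$ obeys the usual eigenvariable conditions and, if it is a constant, has no term assumption leaf $o\Gamma$ in the derivation of the premiss (in $\exists$E: of the minor premiss); (ii) $as$I: from $\varphi\Gamma,\alpha_1\Gamma,\dots,\alpha_n\Gamma$ infer $\varphi\alpha_1\dots\alpha_n$, if this atomic sentence is in $\varphi\Gamma\cap\alpha_1\Gamma\cap\dots\cap\alpha_n\Gamma$; $-as$I: infer $-\varphi\alpha_1\dots\alpha_n$ from the same premisses, if it is not; $as$E, $-as$E: from $\pm\varphi\alpha_1\dots\alpha_n$ infer any of $\varphi\Gamma,\alpha_1\Gamma,\dots,\alpha_n\Gamma$;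 (iii) call $\varphi(\alpha),\varphi(\beta)$ mirror atomic sentences if $\alpha$ occurs in the former and the latter results from the former by exchanging $\alpha$ and $\beta$ at all places; $\overset{+}{=}_Q$I: infer $\alpha\overset{+}{=}_Q\beta$ from derivations, for all $\varphi\in Q$ and all mirror atomic sentences $\varphi(\alpha),\varphi(\beta)$, of each from the other, the latter assumption being discharged; $\overset{+}{=}_Q$E: from $\alpha\overset{+}{=}_Q\beta$ (major premiss) and one of two such sentences ($\varphi\in Q$) infer the other; the same for $\overset{-}{=}_Q$ with $-\varphi$ for $\varphi$; (iv) $\iota_Q$I: infer $\psi(\iota_Q x\varphi(x))$ from its three conjuncts; $\iota_Q$E1–3: from it infer any of them; the same for the three variants with $-\varphi$ or $-\psi$. **Normality.** A derivation is normal if in it no major premiss of an elimination rule is the conclusion of an introduction rule, of $\bot$i, of $\vee$E or of $\exists$E, and every application of $\vee$E or $\exists$E discharges at least one assumption in the derivation of each of its minor premisses. ($\bot$i itself counts neither as an introduction nor as an elimination rule.) The subformulae of a formula are the members of the smallest set that contains it and is closed under immediate subformulae, those of $\forall xB$ and $\exists xB$ being all the instances $B(x/o)$, $o$ a nominal constant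 or variable. **Subformula property.** If $\mathcal D$ is a normal derivation of a formula $A$ whose open assumptions of formulae all belong to the set $\Gamma$ of formulae (term assumptions may occur as leaves), then every formula occurring in $\mathcal D$ is a subformula of some formula in $\Gamma\cup\{A\}$. -/

import Mathlib

namespace QDef

/-- The non-logical vocabulary: nominal constants, predicate constants and their arities. -/
structure Sig : Type 1 where
  Const : Type
  Pred : Type
  arity : Pred → ℕ

/-- Nominal terms in the scope of `n` quantifiers: nominal constants, free nominal variables
(named by numbers), and variables bound by one of the `n` surrounding quantifiers
(`bvar 0` belongs to the innermost one). -/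
inductive Tm (S : Sig) (n : ℕ) : Type where
  | const (c : S.Const)
  | fvar (x : ℕ)
  | bvar (i : Fin n)

/-- Polarity: `pos` for predication and `neg` for predication failure. -/
inductive Pol : Type where
  | pos
  | neg

/-- Formulae in the scope of `n` quantifiers. `pred .pos p o` is the atomic formula `p o₁ … oₖ`,
`pred .neg p o` is the negative predication `−p o₁ … oₖ`. -/
inductive Fm (S : Sig) : ℕ → Type where
  | pred {n : ℕ} (s : Pol) (p : S.Pred) (args : Fin (S.arity p) → Tm S n) : Fm S n
  | bot {n : ℕ} : Fm S n
  | and {n : ℕ} (A B : Fm S n) : Fm S n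
  | or {n : ℕ} (A B : Fm S n) : Fm S n
  | imp {n : ℕ} (A B : Fm S n) : Fm S n
  | all {n : ℕ} (A : Fm S (n + 1)) : Fm S n
  | ex {n : ℕ} (A : Fm S (n + 1)) : Fm S n

/-- Formulae proper: no dangling bound variables (free variables are allowed). -/
abbrev Formula (S : Sig) : Type := Fm S 0

/-- Terms proper: nominal constants and free nominal variables. -/
abbrev Term (S : Sig) : Type := Tm S 0

variable {S : Sig}

namespace Tm

/-- Simultaneous substitution for the bound variables of a term. -/
def subst {n m : ℕ} (σ : Fin n → Tm S m) : Tm S n → Tm S m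
  | .const c => .const c
  | .fvar x => .fvar x
  | .bvar i => σ i

/-- Weakening of a term to the scope of `k` further quantifiers. -/
def weaken {n : ℕ} (k : ℕ) (t : Tm S n) : Tm S (n + k) := t.subst fun i => .bvar (i.addNat k)

/-- A term proper, seen in the scope of `n` quantifiers. -/
def ofTerm {n : ℕ} (t : Term S) : Tm S n := t.subst fun i => i.elim0

/-- Extension of a substitution to the scope of one further quantifier. -/
def up {n m : ℕ} (σ : Fin n → Tm S m) : Fin (n + 1) → Tm S (m + 1) :=
  Fin.cases (.bvar 0) fun i => (σ i).weaken 1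

end Tm

namespace Fm

/-- Simultaneous (capture-free) substitution for the dangling bound variables. -/
def subst : {n m : ℕ} → (Fin n → Tm S m) → Fm S n → Fm S m
  | _, _, σ, .pred s p args => .pred s p fun i => (args i).subst σ
  | _, _, _, .bot => .bot
  | _, _, σ, .and A B => .and (A.subst σ) (B.subst σ)
  | _, _, σ, .or A B => .or (A.subst σ) (B.subst σ)
  | _, _, σ, .imp A B => .imp (A.subst σ) (B.subst σ)
  | _, _, σ, .all A => .all (A.subst (Tm.up σ))
  | _, _, σ, .ex A => .ex (A.subst (Tm.up σ))

/-- `A.inst o` is `A(x/o)`, where `x` is the one dangling bound variable of `A`. -/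
def inst (A : Fm S 1) (o : Term S) : Formula S := A.subst fun _ => o

/-- The term `o` (a nominal constant or a free variable) occurs in the formula. -/
def Has (o : Term S) : {n : ℕ} → Fm S n → Prop
  | _, .pred _ _ args => ∃ i, args i = o.ofTerm
  | _, .bot => False
  | _, .and A B => A.Has o ∨ B.Has o
  | _, .or A B => A.Has o ∨ B.Has o
  | _, .imp A B => A.Has o ∨ B.Has o
  | _, .all A => A.Has o
  | _, .ex A => A.Has o

/-- Defined equivalence. -/
def iff {n : ℕ} (A B : Fm S n) : Fm S n := .and (.imp A B) (.imp B A)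

/-- `A₁ & … & Aₘ`; the empty conjunction is taken to be `⊥ ⊃ ⊥`. -/
def bigAnd {n : ℕ} : List (Fm S n) → Fm S n
  | [] => .imp .bot .bot
  | [A] => A
  | A :: B :: L => .and A (bigAnd (B :: L))

/-- `∀z₁ … ∀zₖ A`. -/
def alls {n : ℕ} : (k : ℕ) → Fm S (n + k) → Fm S n
  | 0, A => A
  | k + 1, A => alls k (.all A)

/-- `p z₁ … o … zₖ`, with `o` at place `j`, in the scope of `∀z₁ … ∀zₖ`
(so `zₖ` is `bvar 0` and `z₁` is `bvar (k - 1)`). -/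
def place {n : ℕ} (s : Pol) (p : S.Pred) (o : Tm S n) (j : Fin (S.arity p)) :
    Fm S (n + S.arity p) :=
  .pred s p fun i =>
    if i = j then o.weaken (S.arity p) else .bvar (i.rev.castLE (Nat.le_add_left _ _))

/-- `P_p(o₁, o₂)` (for `s = pos`) and `N_p(o₁, o₂)` (for `s = neg`): the universal closure of the
conjunction, over all argument places of `p`, of
`±p(… o₁ …) ↔ ±p(… o₂ …)`. -/
def respect {n : ℕ} (s : Pol) (p : S.Pred) (o₁ o₂ : Tm S n) : Fm S n :=
  alls (S.arity p) (bigAnd ((List.finRange (S.arity p)).map fun j =>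
    iff (place s p o₁ j) (place s p o₂ j)))

/-- Qualified identity `o₁ =⁺_Q o₂` (for `s = pos`) and `o₁ =⁻_Q o₂` (for `s = neg`). -/
noncomputable def qid {n : ℕ} (s : Pol) (Q : Finset S.Pred) (o₁ o₂ : Tm S n) : Fm S n :=
  bigAnd (Q.toList.map fun p => respect s p o₁ o₂)

end Fm

/-- The atomic formulae `φ(x)`: they contain at least one occurrence of the variable `x`, which is
the one dangling bound variable. -/
structure AtFm (S : Sig) : Type where
  pred : S.Pred
  args : Fin (S.arity pred) → Tm S 1
  occ : ∃ i, args i = .bvar 0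

namespace AtFm

/-- `φ(x)` or `−φ(x)`. -/
def fm (s : Pol) (φ : AtFm S) : Fm S 1 := .pred s φ.pred φ.args

/-- The clause `∃x ±φ(x)`. -/
def exists_ (s : Pol) (φ : AtFm S) : Formula S := .ex (φ.fm s)

/-- Qualified uniqueness `∀u∀v((±φ(u) & ±φ(v)) ⊃ u =^±_Q v)`, all signs being equal to `s`. -/
noncomputable def unique (s : Pol) (Q : Finset S.Pred) (φ : AtFm S) : Formula S :=
  .all (.all (.imp
    (.and ((φ.fm s).subst fun _ => .bvar 1) ((φ.fm s).subst fun _ => .bvar 0))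
    (Fm.qid s Q (.bvar 1) (.bvar 0))))

/-- The clause `∀w(±φ(w) ⊃ ±ψ(w))`, with sign `s` for `φ` and `t` for `ψ`. -/
def every (s t : Pol) (φ ψ : AtFm S) : Formula S := .all (.imp (φ.fm s) (ψ.fm t))

/-- Qualified definiteness `±ψ(ι_Q x ±φ(x))`, with sign `s` for `φ` and `t` for `ψ`: positive
qualified definiteness for `s = pos`, negative qualified definiteness for `s = neg`. -/
noncomputable def iota (s t : Pol) (Q : Finset S.Pred) (φ ψ : AtFm S) : Formula S :=
  .and (φ.exists_ s) (.and (φ.unique s Q) (every s t φ ψ))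

end AtFm

/-- The formula `p α₁ … αₖ` or `−p α₁ … αₖ`, with nominal constants `αᵢ`. -/
def sent (s : Pol) (p : S.Pred) (as : Fin (S.arity p) → S.Const) : Formula S :=
  .pred s p fun i => .const (as i)

/-- Atomic sentences. -/
structure Atm (S : Sig) : Type where
  pred : S.Pred
  args : Fin (S.arity pred) → S.Const

/-- A subatomic base assigns to every non-logical constant `τ` its set `τΓ` of term assumptions,
which are atomic sentences containing `τ`. -/
structure Base (S : Sig) : Type where
  val : S.Const ⊕ S.Pred → Set (Atm S)
  const_mem : ∀ c, ∀ X ∈ val (.inl c), ∃ i, X.args i = c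
  pred_mem : ∀ p, ∀ X ∈ val (.inr p), X.pred = p

/-- The atomic sentence `X = p α₁ … αₖ` is in `pΓ ∩ α₁Γ ∩ … ∩ αₖΓ`. -/
def Base.Contains (v : Base S) (X : Atm S) : Prop :=
  X ∈ v.val (.inr X.pred) ∧ ∀ i, X ∈ v.val (.inl (X.args i))

/-- The side condition of the introduction rules for atomic sentences (containment) and for
negative predications (negative containment). -/
def Base.Side (v : Base S) : Pol → Atm S → Prop
  | .pos, X => v.Contains X
  | .neg, X => ¬ v.Contains X

/-- The argument lists of mirror atomic sentences `φ(a)` and `φ(b)`: the former contains `a`;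
they are exactly alike except that the former has `a` at all the places at which the latter has
`b`, and vice versa. -/
structure Mirror {k : ℕ} (a b : S.Const) (as bs : Fin k → S.Const) : Prop where
  occ : ∃ i, as i = a
  left : ∀ i, as i = a ↔ bs i = b
  right : ∀ i, as i = b ↔ bs i = a
  alike : ∀ i, as i ≠ a → as i ≠ b → bs i = as i

/-- A unit is a formula or a term assumption `τΓ` (recorded by its constant `τ`). -/
inductive Un (S : Sig) : Type where
  | fm (A : Formula S)
  | ta (τ : S.Const ⊕ S.Pred)

/-- The term `o` occurs in the unit; in `τΓ` it occurs if it is the nominal constant `τ`. -/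
def Un.Has (o : Term S) : Un S → Prop
  | .fm A => A.Has o
  | .ta (.inl c) => o = .const c
  | .ta (.inr _) => False

/-- Derivation trees over the subatomic base `v`, by the unit derived. Assumptions of formulae
carry labels; a discharging rule discharges the assumptions with the given formula and label.
The conditions on the variable or constant `o` in `∀I` and `∃E` are imposed
by `Deriv.EigenOK` below. -/
inductive Deriv (v : Base S) : Un S → Type where
  /-- assumption of a formula -/
  | ass (u : ℕ) (A : Formula S) : Deriv v (.fm A)
  /-- term assumption `τΓ` -/
  | term (τ : S.Const ⊕ S.Pred) : Deriv v (.ta τ)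
  /-- the rule `⊥i` -/
  | botR (A : Formula S) (D : Deriv v (.fm .bot)) : Deriv v (.fm A)
  | andI (A B : Formula S) (D : Deriv v (.fm A)) (E : Deriv v (.fm B)) : Deriv v (.fm (.and A B))
  | andE1 (A B : Formula S) (D : Deriv v (.fm (.and A B))) : Deriv v (.fm A)
  | andE2 (A B : Formula S) (D : Deriv v (.fm (.and A B))) : Deriv v (.fm B)
  | orI1 (A B : Formula S) (D : Deriv v (.fm A)) : Deriv v (.fm (.or A B))
  | orI2 (A B : Formula S) (D : Deriv v (.fm B)) : Deriv v (.fm (.or A B))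
  /-- discharges `A` with label `u` in `E` and `B` with label `w` in `F`;
  the conclusion may be a term assumption -/
  | orE (u w : ℕ) (A B : Formula S) (C : Un S) (D : Deriv v (.fm (.or A B)))
      (E : Deriv v C) (F : Deriv v C) : Deriv v C
  | impI (u : ℕ) (A B : Formula S) (D : Deriv v (.fm B)) : Deriv v (.fm (.imp A B))
  | impE (A B : Formula S) (D : Deriv v (.fm (.imp A B))) (E : Deriv v (.fm A)) : Deriv v (.fm B)
  /-- `∀I` from one premiss `A(x/o)`, `o` a proper variable or a nominal constant -/
  | allI (A : Fm S 1) (o : Term S) (D : Deriv v (.fm (A.inst o))) : Deriv v (.fm (.all A))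
  /-- `∀I` from the premisses `A(x/c)` for all nominal constants `c` -/
  | allIC (A : Fm S 1) (D : ∀ c : S.Const, Deriv v (.fm (A.inst (.const c)))) :
      Deriv v (.fm (.all A))
  | allE (A : Fm S 1) (o : Term S) (D : Deriv v (.fm (.all A))) : Deriv v (.fm (A.inst o))
  | exI (A : Fm S 1) (o : Term S) (D : Deriv v (.fm (A.inst o))) : Deriv v (.fm (.ex A))
  /-- discharges `A(x/o)` with label `u` in `E`; the conclusion may be a term assumption -/
  | exE (u : ℕ) (A : Fm S 1) (o : Term S) (C : Un S) (D : Deriv v (.fm (.ex A)))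
      (E : Deriv v C) : Deriv v C
  /-- `asI` and `−asI` -/
  | asI (s : Pol) (X : Atm S) (side : v.Side s X) (D : Deriv v (.ta (.inr X.pred)))
      (E : ∀ i, Deriv v (.ta (.inl (X.args i)))) : Deriv v (.fm (sent s X.pred X.args))
  /-- `asE₀` and `−asE₀` -/
  | asE0 (s : Pol) (X : Atm S) (D : Deriv v (.fm (sent s X.pred X.args))) :
      Deriv v (.ta (.inr X.pred))
  /-- `asEᵢ` and `−asEᵢ`, for the argument places `i` -/
  | asE (s : Pol) (X : Atm S) (i : Fin (S.arity X.pred))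
      (D : Deriv v (.fm (sent s X.pred X.args))) : Deriv v (.ta (.inl (X.args i)))
  /-- introduction of qualified identity: for all `p` in `Q` and all mirror sentences `±p(a)`,
  `±p(b)`, the latter is derived from the former (discharged, with the label given by `l₁`)
  and conversely (with the label given by `l₂`) -/
  | qidI (s : Pol) (Q : Finset S.Pred) (a b : S.Const)
      (l₁ l₂ : (p : S.Pred) → (Fin (S.arity p) → S.Const) → ℕ)
      (D : ∀ p ∈ Q, ∀ as bs, Mirror a b as bs → Deriv v (.fm (sent s p bs)))
      (E : ∀ p ∈ Q, ∀ as bs, Mirror a b as bs → Deriv v (.fm (sent s p as))) :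
      Deriv v (.fm (Fm.qid s Q (.const a) (.const b)))
  | qidE1 (s : Pol) (Q : Finset S.Pred) (a b : S.Const) (p : S.Pred) (hp : p ∈ Q)
      (as bs : Fin (S.arity p) → S.Const) (h : Mirror a b as bs)
      (D : Deriv v (.fm (Fm.qid s Q (.const a) (.const b))))
      (E : Deriv v (.fm (sent s p as))) : Deriv v (.fm (sent s p bs))
  | qidE2 (s : Pol) (Q : Finset S.Pred) (a b : S.Const) (p : S.Pred) (hp : p ∈ Q)
      (as bs : Fin (S.arity p) → S.Const) (h : Mirror a b as bs)
      (D : Deriv v (.fm (Fm.qid s Q (.const a) (.const b))))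
      (E : Deriv v (.fm (sent s p bs))) : Deriv v (.fm (sent s p as))
  | iotaI (s t : Pol) (Q : Finset S.Pred) (φ ψ : AtFm S) (D : Deriv v (.fm (φ.exists_ s)))
      (E : Deriv v (.fm (φ.unique s Q))) (F : Deriv v (.fm (AtFm.every s t φ ψ))) :
      Deriv v (.fm (AtFm.iota s t Q φ ψ))
  | iotaE1 (s t : Pol) (Q : Finset S.Pred) (φ ψ : AtFm S)
      (D : Deriv v (.fm (AtFm.iota s t Q φ ψ))) : Deriv v (.fm (φ.exists_ s))
  | iotaE2 (s t : Pol) (Q : Finset S.Pred) (φ ψ : AtFm S)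
      (D : Deriv v (.fm (AtFm.iota s t Q φ ψ))) : Deriv v (.fm (φ.unique s Q))
  | iotaE3 (s t : Pol) (Q : Finset S.Pred) (φ ψ : AtFm S)
      (D : Deriv v (.fm (AtFm.iota s t Q φ ψ))) : Deriv v (.fm (AtFm.every s t φ ψ))

/-- Derivation trees, bundled with the unit derived. -/
abbrev Tree (v : Base S) : Type := Σ U : Un S, Deriv v U

namespace Deriv

variable {v : Base S}

/-- The derivations of the premisses of the last rule applied. -/
def prems : {U : Un S} → Deriv v U → Set (Tree v)
  | _, .ass _ _ => ∅
  | _, .term _ => ∅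
  | _, .botR _ D => {⟨_, D⟩}
  | _, .andI _ _ D E => {⟨_, D⟩, ⟨_, E⟩}
  | _, .andE1 _ _ D => {⟨_, D⟩}
  | _, .andE2 _ _ D => {⟨_, D⟩}
  | _, .orI1 _ _ D => {⟨_, D⟩}
  | _, .orI2 _ _ D => {⟨_, D⟩}
  | _, .orE _ _ _ _ _ D E F => {⟨_, D⟩, ⟨_, E⟩, ⟨_, F⟩}
  | _, .impI _ _ _ D => {⟨_, D⟩}
  | _, .impE _ _ D E => {⟨_, D⟩, ⟨_, E⟩}
  | _, .allI _ _ D => {⟨_, D⟩}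
  | _, .allIC _ D => {T | ∃ c, T = ⟨_, D c⟩}
  | _, .allE _ _ D => {⟨_, D⟩}
  | _, .exI _ _ D => {⟨_, D⟩}
  | _, .exE _ _ _ _ D E => {⟨_, D⟩, ⟨_, E⟩}
  | _, .asI _ _ _ D E => {T | T = ⟨_, D⟩ ∨ ∃ i, T = ⟨_, E i⟩}
  | _, .asE0 _ _ D => {⟨_, D⟩}
  | _, .asE _ _ _ D => {⟨_, D⟩}
  | _, .qidI _ _ _ _ _ _ D E =>
      {T | ∃ p hp as bs h, T = ⟨_, D p hp as bs h⟩ ∨ T = ⟨_, E p hp as bs h⟩}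
  | _, .qidE1 _ _ _ _ _ _ _ _ _ D E => {⟨_, D⟩, ⟨_, E⟩}
  | _, .qidE2 _ _ _ _ _ _ _ _ _ D E => {⟨_, D⟩, ⟨_, E⟩}
  | _, .iotaI _ _ _ _ _ D E F => {⟨_, D⟩, ⟨_, E⟩, ⟨_, F⟩}
  | _, .iotaE1 _ _ _ _ _ D => {⟨_, D⟩}
  | _, .iotaE2 _ _ _ _ _ D => {⟨_, D⟩}
  | _, .iotaE3 _ _ _ _ _ D => {⟨_, D⟩}

/-- `Within T R`: the tree `T` is a subderivation of `R` (possibly `R` itself). -/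
inductive Within : Tree v → Tree v → Prop where
  | refl (T : Tree v) : Within T T
  | step {T P R : Tree v} : P ∈ R.2.prems → Within T P → Within T R

/-- The unit `W` occurs in the derivation `D`, as an assumption or as a conclusion of a rule. -/
def Occurs {U : Un S} (D : Deriv v U) (W : Un S) : Prop :=
  ∃ E : Deriv v W, Within ⟨W, E⟩ ⟨U, D⟩

/-- The open (undischarged) assumptions of formulae, with their labels. -/
def opens : {U : Un S} → Deriv v U → Set (ℕ × Formula S)
  | _, .ass u A => {(u, A)}
  | _, .term _ => ∅
  | _, .botR _ D => D.opens
  | _, .andI _ _ D E => D.opens ∪ E.opens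
  | _, .andE1 _ _ D => D.opens
  | _, .andE2 _ _ D => D.opens
  | _, .orI1 _ _ D => D.opens
  | _, .orI2 _ _ D => D.opens
  | _, .orE u w A B _ D E F => D.opens ∪ (E.opens \ {(u, A)}) ∪ (F.opens \ {(w, B)})
  | _, .impI u A _ D => D.opens \ {(u, A)}
  | _, .impE _ _ D E => D.opens ∪ E.opens
  | _, .allI _ _ D => D.opens
  | _, .allIC _ D => ⋃ c, (D c).opens
  | _, .allE _ _ D => D.opens
  | _, .exI _ _ D => D.opens
  | _, .exE u A o _ D E => D.opens ∪ (E.opens \ {(u, A.inst o)})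
  | _, .asI _ _ _ D E => D.opens ∪ ⋃ i, (E i).opens
  | _, .asE0 _ _ D => D.opens
  | _, .asE _ _ _ D => D.opens
  | _, .qidI s _ _ _ l₁ l₂ D E =>
      {x | ∃ p hp as bs h, x ∈ (D p hp as bs h).opens \ {(l₁ p as, sent s p as)} ∨
        x ∈ (E p hp as bs h).opens \ {(l₂ p bs, sent s p bs)}}
  | _, .qidE1 _ _ _ _ _ _ _ _ _ D E => D.opens ∪ E.opens
  | _, .qidE2 _ _ _ _ _ _ _ _ _ D E => D.opens ∪ E.opens
  | _, .iotaI _ _ _ _ _ D E F => D.opens ∪ E.opens ∪ F.opens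
  | _, .iotaE1 _ _ _ _ _ D => D.opens
  | _, .iotaE2 _ _ _ _ _ D => D.opens
  | _, .iotaE3 _ _ _ _ _ D => D.opens

/-- The term `o` is a nominal constant with a term assumption leaf `oΓ` in `D`. -/
def HasTermLeaf {U : Un S} (D : Deriv v U) (o : Term S) : Prop :=
  ∃ c : S.Const, o = .const c ∧ Within ⟨_, .term (.inl c)⟩ ⟨U, D⟩

/-- The side conditions of `∀I` (from one premiss) and of `∃E` for the last rule applied. -/
def EigenOK : {U : Un S} → Deriv v U → Prop
  | _, .allI A o D =>
      ¬ (Fm.all A).Has o ∧ (∀ x ∈ D.opens, ¬ x.2.Has o) ∧ ¬ D.HasTermLeaf o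
  | _, .exE u A o C _ E =>
      ¬ (Fm.ex A).Has o ∧ ¬ C.Has o ∧ (∀ x ∈ E.opens \ {(u, A.inst o)}, ¬ x.2.Has o) ∧
        ¬ E.HasTermLeaf o
  | _, _ => True

/-- The tree is a derivation from the set `Γ` of formulae: every application of `∀I` and `∃E` in
it obeys its side conditions, and all open assumptions of formulae are in `Γ`. (Term assumptions
are given by the base and may always be used.) -/
def IsFrom {U : Un S} (D : Deriv v U) (Γ : Set (Formula S)) : Prop :=
  (∀ T : Tree v, Within T ⟨U, D⟩ → T.2.EigenOK) ∧ ∀ x ∈ D.opens, x.2 ∈ Γ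

/-- The last rule applied is an introduction rule. -/
def IsIntro : {U : Un S} → Deriv v U → Prop
  | _, .andI _ _ _ _ => True
  | _, .orI1 _ _ _ => True
  | _, .orI2 _ _ _ => True
  | _, .impI _ _ _ _ => True
  | _, .allI _ _ _ => True
  | _, .allIC _ _ => True
  | _, .exI _ _ _ => True
  | _, .asI _ _ _ _ _ => True
  | _, .qidI _ _ _ _ _ _ _ _ => True
  | _, .iotaI _ _ _ _ _ _ _ _ => True
  | _, _ => False

/-- The last rule applied is `⊥i`. -/
def IsBot : {U : Un S} → Deriv v U → Prop
  | _, .botR _ _ => True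
  | _, _ => False

/-- The last rule applied is `∨E` or `∃E`. -/
def IsOrExE : {U : Un S} → Deriv v U → Prop
  | _, .orE _ _ _ _ _ _ _ _ => True
  | _, .exE _ _ _ _ _ _ => True
  | _, _ => False

/-- `D.Major T`: the last rule of `D` is an elimination rule and `T` derives its major premiss. -/
def Major : {U : Un S} → Deriv v U → Tree v → Prop
  | _, .andE1 _ _ D, T => T = ⟨_, D⟩
  | _, .andE2 _ _ D, T => T = ⟨_, D⟩
  | _, .orE _ _ _ _ _ D _ _, T => T = ⟨_, D⟩
  | _, .impE _ _ D _, T => T = ⟨_, D⟩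
  | _, .allE _ _ D, T => T = ⟨_, D⟩
  | _, .exE _ _ _ _ D _, T => T = ⟨_, D⟩
  | _, .asE0 _ _ D, T => T = ⟨_, D⟩
  | _, .asE _ _ _ D, T => T = ⟨_, D⟩
  | _, .qidE1 _ _ _ _ _ _ _ _ _ D _, T => T = ⟨_, D⟩
  | _, .qidE2 _ _ _ _ _ _ _ _ _ D _, T => T = ⟨_, D⟩
  | _, .iotaE1 _ _ _ _ _ D, T => T = ⟨_, D⟩
  | _, .iotaE2 _ _ _ _ _ D, T => T = ⟨_, D⟩
  | _, .iotaE3 _ _ _ _ _ D, T => T = ⟨_, D⟩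
  | _, _, _ => False

/-- The major premiss of the last rule is maximal: it is the conclusion of an introduction rule
or of `⊥i`. (Qualified identity and definiteness formulae are literally the formulae that define
them, so an introduction rule for them may also meet an elimination rule for the principal
operator of the defining formula, and conversely; such detours are included.) -/
def MaximalAt {U : Un S} (D : Deriv v U) : Prop :=
  ∃ T : Tree v, D.Major T ∧ (T.2.IsIntro ∨ T.2.IsBot)

/-- Permutative detour: the major premiss of the last rule is the conclusion of `∨E` or `∃E`. -/
def PermutativeAt {U : Un S} (D : Deriv v U) : Prop :=
  ∃ T : Tree v, D.Major T ∧ T.2.IsOrExE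

/-- Simplifiable detour: the last rule is `∨E` or `∃E`, and in the derivation of one of its minor
premisses no assumption is discharged. -/
def SimplifiableAt : {U : Un S} → Deriv v U → Prop
  | _, .orE u w A B _ _ E F => (u, A) ∉ E.opens ∨ (w, B) ∉ F.opens
  | _, .exE u A o _ _ E => (u, A.inst o) ∉ E.opens
  | _, _ => False

/-- Normal derivations: no maximal formula, no permutative and no simplifiable detour. -/
def Normal {U : Un S} (D : Deriv v U) : Prop :=
  ∀ T : Tree v, Within T ⟨U, D⟩ →
    ¬ T.2.MaximalAt ∧ ¬ T.2.PermutativeAt ∧ ¬ T.2.SimplifiableAt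

end Deriv

/-- `Subformula A B`: `A` is a subformula of `B`, where the immediate subformulae of `∀xB` and
`∃xB` are all the instances `B(x/o)`. -/
inductive Subformula : Formula S → Formula S → Prop where
  | refl (A : Formula S) : Subformula A A
  | andL {A B C : Formula S} : Subformula A B → Subformula A (.and B C)
  | andR {A B C : Formula S} : Subformula A C → Subformula A (.and B C)
  | orL {A B C : Formula S} : Subformula A B → Subformula A (.or B C)
  | orR {A B C : Formula S} : Subformula A C → Subformula A (.or B C)
  | impL {A B C : Formula S} : Subformula A B → Subformula A (.imp B C)
  | impR {A B C : Formula S} : Subformula A C → Subformula A (.imp B C)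
  | all {A : Formula S} {B : Fm S 1} (o : Term S) : Subformula A (B.inst o) → Subformula A (.all B)
  | ex {A : Formula S} {B : Fm S 1} (o : Term S) : Subformula A (B.inst o) → Subformula A (.ex B)

end QDef

/-!
Call a derivation neutral if it is an assumption or ends with an elimination other than `∨E` and
`∃E`; in a normal derivation all major premisses are neutral. Fix a set `K` of formulae that is
closed under subformulae and contains the open assumptions. Every formula of a normal derivation
lies in `K` as soon as its conclusion does, or is `⊥`, or the derivation is neutral. In a single
induction, the major premiss, being neutral and discharging nothing, is treated first: it puts the
principal formula of the last rule into `K`. This controls the discharged assumptions, the minor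
premisses and the conclusion, all of which are subformulae of it. The clause for `⊥` takes care of
the premiss of `⊥i`, and is harmless because no introduction rule derives `⊥`.
-/

namespace QDef

variable {S : Sig}

namespace Tm

theorem subst_bvar {n : ℕ} (t : Tm S n) : t.subst .bvar = t := by
  cases t <;> rfl

theorem subst_subst {n m k : ℕ} (σ : Fin n → Tm S m) (τ : Fin m → Tm S k) (t : Tm S n) :
    (t.subst σ).subst τ = t.subst fun i => (σ i).subst τ := by
  cases t <;> rfl

theorem subst_term (σ : Fin 0 → Term S) (t : Term S) : t.subst σ = t := by
  rw [Subsingleton.elim σ .bvar, subst_bvar]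

theorem subst_weaken {n m k : ℕ} (σ : Fin (n + k) → Tm S m) (t : Tm S n) :
    (t.weaken k).subst σ = t.subst fun i => σ (i.addNat k) :=
  subst_subst _ _ t

theorem up_bvar {n : ℕ} : up (.bvar : Fin n → Tm S n) = .bvar := by
  funext i
  cases i using Fin.cases <;> rfl

theorem up_subst_up {n m k : ℕ} (σ : Fin n → Tm S m) (τ : Fin m → Tm S k) :
    (fun i => (up σ i).subst (up τ)) = up fun i => (σ i).subst τ := by
  funext i
  cases i using Fin.cases with
  | zero => rfl
  | succ i => exact (subst_weaken _ _).trans (subst_subst _ _ _).symm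

end Tm

namespace Fm

theorem subst_bvar {n : ℕ} (A : Fm S n) : A.subst .bvar = A := by
  induction A <;> simp_all only [subst, Tm.subst_bvar, Tm.up_bvar]

theorem subst_subst {n m k : ℕ} (A : Fm S n) (σ : Fin n → Tm S m) (τ : Fin m → Tm S k) :
    (A.subst σ).subst τ = A.subst fun i => (σ i).subst τ := by
  induction A generalizing m k <;> simp_all only [subst, Tm.subst_subst, Tm.up_subst_up]

theorem subst_formula (σ : Fin 0 → Term S) (A : Formula S) : A.subst σ = A := by
  rw [Subsingleton.elim σ .bvar, subst_bvar]

theorem inst_subst_up {n : ℕ} (A : Fm S (n + 1)) (σ : Fin (n + 1) → Term S) :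
    (A.subst (Tm.up fun i => σ i.succ)).inst (σ 0) = A.subst σ := by
  rw [inst, subst_subst]
  congr 1
  funext i
  cases i using Fin.cases with
  | zero => rfl
  | succ i =>
    exact (Tm.subst_weaken (fun _ : Fin (0 + 1) => σ 0) (σ i.succ)).trans (Tm.subst_term _ _)

theorem subst_bigAnd {n m : ℕ} (σ : Fin n → Tm S m) (L : List (Fm S n)) :
    (bigAnd L).subst σ = bigAnd (L.map (subst σ)) := by
  match L with
  | [] | [_] => rfl
  | A :: B :: L => exact congrArg (and _) (subst_bigAnd σ (B :: L))

theorem subst_place (s : Pol) (p : S.Pred) (as : Fin (S.arity p) → S.Const)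
    (j : Fin (S.arity p)) :
    (place (n := 0) s p (.const (as j)) j).subst
      (fun i => .const (as (i.cast (Nat.zero_add _)).rev)) = sent s p as := by
  unfold place sent subst
  congr 1
  funext i
  beta_reduce
  split_ifs with h
  · rw [h]
    rfl
  · exact congrArg (fun i => Tm.const (as i)) i.rev_rev

theorem bigAnd_ne_bot {n : ℕ} {L : List (Fm S n)} (h : ∀ A ∈ L, A ≠ .bot) :
    bigAnd L ≠ .bot := by
  match L with
  | [] => exact nofun
  | [A] => exact h A (List.mem_singleton_self A)
  | _ :: _ :: _ => exact nofun

theorem alls_ne_bot {n k : ℕ} {A : Fm S (n + k)} (h : A ≠ .bot) : alls k A ≠ .bot := by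
  induction k with
  | zero => exact h
  | succ k ih => exact ih (A := .all A) nofun

theorem respect_ne_bot {n : ℕ} (s : Pol) (p : S.Pred) (o₁ o₂ : Tm S n) :
    respect s p o₁ o₂ ≠ .bot := by
  refine alls_ne_bot (bigAnd_ne_bot ?_)
  simp [iff]

theorem qid_ne_bot {n : ℕ} (s : Pol) (Q : Finset S.Pred) (o₁ o₂ : Tm S n) :
    qid s Q o₁ o₂ ≠ .bot := by
  refine bigAnd_ne_bot ?_
  simp [respect_ne_bot]

end Fm

namespace Subformula

theorem trans {A B C : Formula S} (hAB : Subformula A B) (hBC : Subformula B C) :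
    Subformula A C := by
  induction hBC with
  | refl => exact hAB
  | andL _ ih => exact ih.andL
  | andR _ ih => exact ih.andR
  | orL _ ih => exact ih.orL
  | orR _ ih => exact ih.orR
  | impL _ ih => exact ih.impL
  | impR _ ih => exact ih.impR
  | all o _ ih => exact ih.all o
  | ex o _ ih => exact ih.ex o

theorem bigAnd_of_mem {A : Formula S} {L : List (Formula S)} (hA : A ∈ L) :
    Subformula A (Fm.bigAnd L) := by
  match L with
  | [B] => exact List.mem_singleton.1 hA ▸ .refl A
  | B :: C :: L =>
    rcases List.mem_cons.1 hA with rfl | hA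
    · exact .andL (.refl A)
    · exact .andR (bigAnd_of_mem hA)

theorem subst_alls {k : ℕ} (A : Fm S (0 + k)) (σ : Fin (0 + k) → Term S) :
    Subformula (A.subst σ) (Fm.alls k A) := by
  induction k with
  | zero => exact (A.subst_formula σ).symm ▸ .refl A
  | succ k ih =>
    refine trans (.all (σ 0) ?_) (ih (.all A) fun i => σ i.succ)
    exact Fm.inst_subst_up A σ ▸ .refl _

theorem iff_place_qid (s : Pol) {Q : Finset S.Pred} {p : S.Pred} (hp : p ∈ Q) (o₁ o₂ : Term S)
    (j : Fin (S.arity p)) (σ : Fin (0 + S.arity p) → Term S) :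
    Subformula ((Fm.iff (Fm.place s p o₁ j) (Fm.place s p o₂ j)).subst σ)
      (Fm.qid s Q o₁ o₂) := by
  have h_respect : Subformula (Fm.respect s p o₁ o₂) (Fm.qid s Q o₁ o₂) :=
    bigAnd_of_mem (List.mem_map_of_mem (Finset.mem_toList.2 hp))
  refine trans ?_ ((subst_alls _ σ).trans h_respect)
  rw [Fm.subst_bigAnd]
  exact bigAnd_of_mem (List.mem_map_of_mem (List.mem_map_of_mem (List.mem_finRange j)))

theorem sent_qid_left (s : Pol) {Q : Finset S.Pred} {p : S.Pred} (hp : p ∈ Q) {a : S.Const}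
    (b : S.Const) {as : Fin (S.arity p) → S.Const} (ha : ∃ i, as i = a) :
    Subformula (sent s p as) (Fm.qid s Q (.const a) (.const b)) := by
  obtain ⟨j, rfl⟩ := ha
  refine trans ?_ (iff_place_qid s hp _ _ j fun i => .const (as (i.cast (Nat.zero_add _)).rev))
  exact .andL (.impL (Fm.subst_place s p as j ▸ .refl _))

theorem sent_qid_right (s : Pol) {Q : Finset S.Pred} {p : S.Pred} (hp : p ∈ Q) (a : S.Const)
    {b : S.Const} {bs : Fin (S.arity p) → S.Const} (hb : ∃ i, bs i = b) :
    Subformula (sent s p bs) (Fm.qid s Q (.const a) (.const b)) := by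
  obtain ⟨j, rfl⟩ := hb
  refine trans ?_ (iff_place_qid s hp _ _ j fun i => .const (bs (i.cast (Nat.zero_add _)).rev))
  exact .andL (.impR (Fm.subst_place s p bs j ▸ .refl _))

end Subformula

/-- Sets of formulae containing all subformulae of their members. -/
def SubformulaClosed (K : Set (Formula S)) : Prop :=
  ∀ ⦃A B : Formula S⦄, Subformula A B → B ∈ K → A ∈ K

theorem subformulaClosed_subformulae (X : Set (Formula S)) :
    SubformulaClosed {A | ∃ C ∈ X, Subformula A C} :=
  fun _ _ hAB ⟨C, hC, hBC⟩ => ⟨C, hC, hAB.trans hBC⟩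

theorem Mirror.occ_right {k : ℕ} {a b : S.Const} {as bs : Fin k → S.Const}
    (h : Mirror a b as bs) : ∃ i, bs i = b :=
  h.occ.imp fun i => (h.left i).1

namespace Deriv

variable {v : Base S} {U : Un S}

theorem prems_induction {motive : ∀ {U : Un S}, Deriv v U → Prop}
    (step : ∀ {U : Un S} (D : Deriv v U), (∀ T ∈ D.prems, motive T.2) → motive D)
    (D : Deriv v U) : motive D := by
  induction D with
  | ass | term => exact step _ nofun
  | botR | andE1 | andE2 | orI1 | orI2 | impI | allI | allE | exI | asE0 | asE | iotaE1 | iotaE2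
    | iotaE3 =>
    exact step _ (by rintro _ rfl; assumption)
  | andI | impE | exE | qidE1 | qidE2 => exact step _ (by rintro _ (rfl | rfl) <;> assumption)
  | orE | iotaI => exact step _ (by rintro _ (rfl | rfl | rfl) <;> assumption)
  | allIC _ _ ih => exact step _ (by rintro _ ⟨c, rfl⟩; exact ih c)
  | asI _ _ _ _ _ ihD ihE => exact step _ (by rintro _ (rfl | ⟨i, rfl⟩); exacts [ihD, ihE i])
  | qidI _ _ _ _ _ _ _ _ ihD ihE =>
    refine step _ ?_
    rintro _ ⟨p, hp, as, bs, h, rfl | rfl⟩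
    · exact ihD p hp as bs h
    · exact ihE p hp as bs h

theorem occurs_iff {D : Deriv v U} {W : Un S} :
    D.Occurs W ↔ U = W ∨ ∃ T ∈ D.prems, T.2.Occurs W := by
  constructor
  · rintro ⟨E, hE⟩
    cases hE with
    | refl => exact .inl rfl
    | step hP hE => exact .inr ⟨_, hP, E, hE⟩
  · rintro (rfl | ⟨T, hT, E, hE⟩)
    · exact ⟨D, .refl _⟩
    · exact ⟨E, .step hT hE⟩

/-- The derivation is an assumption, or its last rule is an elimination rule other than `∨E` and
`∃E`. -/
def Neutral (D : Deriv v U) : Prop :=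
  ¬ D.IsIntro ∧ ¬ D.IsBot ∧ ¬ D.IsOrExE

/-- Normality without the requirement that there be no simplifiable detours. -/
def DetourFree (D : Deriv v U) : Prop :=
  ∀ T : Tree v, Within T ⟨U, D⟩ → ¬ T.2.MaximalAt ∧ ¬ T.2.PermutativeAt

theorem Normal.detourFree {D : Deriv v U} (hD : D.Normal) : D.DetourFree :=
  fun T hT => ⟨(hD T hT).1, (hD T hT).2.1⟩

theorem DetourFree.of_mem_prems {D : Deriv v U} (hD : D.DetourFree) {T : Tree v}
    (hT : T ∈ D.prems) : T.2.DetourFree :=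
  fun R hR => hD R (.step hT hR)

theorem DetourFree.neutral_of_major {D : Deriv v U} (hD : D.DetourFree) {T : Tree v}
    (hT : D.Major T) : T.2.Neutral := by
  obtain ⟨h_max, h_perm⟩ := hD ⟨U, D⟩ (.refl _)
  exact ⟨fun h => h_max ⟨T, hT, .inl h⟩, fun h => h_max ⟨T, hT, .inr h⟩,
    fun h => h_perm ⟨T, hT, h⟩⟩

/-- `D.SubPrincipal A`: the formula `A` is a subformula of the principal formula of the last rule
of `D`, which is the conclusion of an introduction and the major premiss of an elimination. -/
inductive SubPrincipal : {U : Un S} → Deriv v U → Formula S → Prop where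
  | intro {A C : Formula S} {D : Deriv v (.fm C)} :
      D.IsIntro → Subformula A C → SubPrincipal D A
  | elim {U : Un S} {D : Deriv v U} {A C : Formula S} {M : Deriv v (.fm C)} :
      D.Major ⟨_, M⟩ → Subformula A C → SubPrincipal D A

theorem IsIntro.ne_bot {A : Formula S} {D : Deriv v (.fm A)} (hD : D.IsIntro) : A ≠ .bot := by
  cases D with
  | qidI => exact Fm.qid_ne_bot _ _ _ _
  | andI | orI1 | orI2 | impI | allI | allIC | exI | asI | iotaI => exact nofun
  | _ => exact hD.elim

theorem Major.mem_prems {D : Deriv v U} {T : Tree v} (hT : D.Major T) : T ∈ D.prems := by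
  cases D <;> simp_all [Major, prems]

theorem Major.opens_subset {D : Deriv v U} {T : Tree v} (hT : D.Major T) :
    T.2.opens ⊆ D.opens := by
  cases D <;> simp only [Major] at hT <;> subst hT <;> simp [opens, Set.union_assoc]

theorem mem_opens_or_subPrincipal_of_diff_subset {D : Deriv v U} {s : Set (ℕ × Formula S)}
    {x : ℕ × Formula S} {u : ℕ} {A : Formula S} (hs : s \ {(u, A)} ⊆ D.opens)
    (hA : D.SubPrincipal A) (hx : x ∈ s) : x ∈ D.opens ∨ D.SubPrincipal x.2 := by
  by_cases h : x = (u, A)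
  · exact .inr (h ▸ hA)
  · exact .inl (hs ⟨hx, h⟩)

theorem mem_opens_or_subPrincipal {D : Deriv v U} {T : Tree v} (hT : T ∈ D.prems)
    {x : ℕ × Formula S} (hx : x ∈ T.2.opens) : x ∈ D.opens ∨ D.SubPrincipal x.2 := by
  cases D with
  | ass | term => exact hT.elim
  | botR | andE1 | andE2 | orI1 | orI2 | allI | allE | exI | asE0 | asE | iotaE1 | iotaE2
    | iotaE3 =>
    obtain rfl := hT
    exact .inl hx
  | andI | impE | qidE1 | qidE2 =>
    rcases hT with rfl | rfl
    exacts [.inl (.inl hx), .inl (.inr hx)]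
  | iotaI =>
    rcases hT with rfl | rfl | rfl
    exacts [.inl (.inl (.inl hx)), .inl (.inl (.inr hx)), .inl (.inr hx)]
  | allIC =>
    obtain ⟨c, rfl⟩ := hT
    exact .inl (Set.mem_iUnion.2 ⟨c, hx⟩)
  | asI =>
    rcases hT with rfl | ⟨i, rfl⟩
    exacts [.inl (.inl hx), .inl (.inr (Set.mem_iUnion.2 ⟨i, hx⟩))]
  | orE =>
    rcases hT with rfl | rfl | rfl
    · exact .inl (.inl (.inl hx))
    · exact mem_opens_or_subPrincipal_of_diff_subset (fun _ h => .inl (.inr h))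
        (.elim rfl (.orL (.refl _))) hx
    · exact mem_opens_or_subPrincipal_of_diff_subset (fun _ h => .inr h)
        (.elim rfl (.orR (.refl _))) hx
  | impI =>
    obtain rfl := hT
    exact mem_opens_or_subPrincipal_of_diff_subset subset_rfl
      (.intro trivial (.impL (.refl _))) hx
  | exE _ _ o =>
    rcases hT with rfl | rfl
    · exact .inl (.inl hx)
    · exact mem_opens_or_subPrincipal_of_diff_subset (fun _ h => .inr h)
        (.elim rfl (.ex o (.refl _))) hx
  | qidI s _ a b =>
    obtain ⟨p, hp, as, bs, hM, rfl | rfl⟩ := hT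
    · exact mem_opens_or_subPrincipal_of_diff_subset (fun _ h => ⟨p, hp, as, bs, hM, .inl h⟩)
        (.intro trivial (.sent_qid_left s hp b hM.occ)) hx
    · exact mem_opens_or_subPrincipal_of_diff_subset (fun _ h => ⟨p, hp, as, bs, hM, .inr h⟩)
        (.intro trivial (.sent_qid_right s hp a hM.occ_right)) hx

theorem IsIntro.subformula_of_mem_prems {A C : Formula S} {D : Deriv v (.fm C)} (hD : D.IsIntro)
    {E : Deriv v (.fm A)} (hE : ⟨_, E⟩ ∈ D.prems) : Subformula A C := by
  cases D with
  | andI =>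
    rcases hE with h | h <;> cases h
    exacts [.andL (.refl _), .andR (.refl _)]
  | orI1 => cases hE; exact .orL (.refl _)
  | orI2 => cases hE; exact .orR (.refl _)
  | impI => cases hE; exact .impR (.refl _)
  | allI _ o => cases hE; exact .all o (.refl _)
  | allIC =>
    obtain ⟨c, h⟩ := hE
    cases h
    exact .all (.const c) (.refl _)
  | exI _ o => cases hE; exact .ex o (.refl _)
  | asI => rcases hE with h | ⟨i, h⟩ <;> cases h
  | qidI s _ a b =>
    obtain ⟨p, hp, as, bs, hM, h | h⟩ := hE <;> cases h
    exacts [.sent_qid_right s hp a hM.occ_right, .sent_qid_left s hp b hM.occ]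
  | iotaI =>
    rcases hE with h | h | h <;> cases h
    exacts [.andL (.refl _), .andR (.andL (.refl _)), .andR (.andR (.refl _))]
  | _ => exact hD.elim

theorem prem_cases {D : Deriv v U} {A : Formula S} {E : Deriv v (.fm A)}
    (hE : ⟨_, E⟩ ∈ D.prems) :
    D.Major ⟨_, E⟩ ∨ D.SubPrincipal A ∨ (D.IsBot ∧ A = .bot) ∨ (D.IsOrExE ∧ U = .fm A) := by
  cases D with
  | ass | term => exact hE.elim
  | andE1 | andE2 | allE | asE0 | asE | iotaE1 | iotaE2 | iotaE3 => exact .inl hE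
  | botR => cases hE; exact .inr (.inr (.inl ⟨trivial, rfl⟩))
  | orE =>
    refine hE.imp_right fun h => ?_
    rcases h with h | h <;> cases h <;> exact .inr (.inr ⟨trivial, rfl⟩)
  | exE => exact hE.imp_right fun h => by cases h; exact .inr (.inr ⟨trivial, rfl⟩)
  | impE => exact hE.imp_right fun h => by cases h; exact .inl (.elim rfl (.impL (.refl _)))
  | qidE1 s _ _ b _ hp _ _ hM =>
    exact hE.imp_right fun h => by cases h; exact .inl (.elim rfl (.sent_qid_left s hp b hM.occ))
  | qidE2 s _ a _ _ hp _ _ hM =>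
    exact hE.imp_right fun h => by
      cases h; exact .inl (.elim rfl (.sent_qid_right s hp a hM.occ_right))
  | _ => exact .inr (.inl (.intro trivial (IsIntro.subformula_of_mem_prems (by trivial) hE)))

theorem concl_cases {A : Formula S} (D : Deriv v (.fm A)) :
    (∃ u, (u, A) ∈ D.opens) ∨ D.SubPrincipal A ∨
      (D.IsBot ∧ ∃ E : Deriv v (.fm .bot), ⟨_, E⟩ ∈ D.prems) ∨
      (D.IsOrExE ∧ ∃ E : Deriv v (.fm A), ⟨_, E⟩ ∈ D.prems) := by
  cases D with
  | ass u => exact .inl ⟨u, rfl⟩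
  | botR _ D => exact .inr (.inr (.inl ⟨trivial, D, rfl⟩))
  | orE _ _ _ _ _ _ E => exact .inr (.inr (.inr ⟨trivial, E, .inr (.inl rfl)⟩))
  | exE _ _ _ _ _ E => exact .inr (.inr (.inr ⟨trivial, E, .inr rfl⟩))
  | andE1 | iotaE1 => exact .inr (.inl (.elim rfl (.andL (.refl _))))
  | andE2 => exact .inr (.inl (.elim rfl (.andR (.refl _))))
  | impE => exact .inr (.inl (.elim rfl (.impR (.refl _))))
  | allE _ o => exact .inr (.inl (.elim rfl (.all o (.refl _))))
  | qidE1 s _ a _ _ hp _ _ h =>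
    exact .inr (.inl (.elim rfl (.sent_qid_right s hp a h.occ_right)))
  | qidE2 s _ _ b _ hp _ _ h => exact .inr (.inl (.elim rfl (.sent_qid_left s hp b h.occ)))
  | iotaE2 => exact .inr (.inl (.elim rfl (.andR (.andL (.refl _)))))
  | iotaE3 => exact .inr (.inl (.elim rfl (.andR (.andR (.refl _)))))
  | _ => exact .inr (.inl (.intro trivial (.refl _)))

/-- `D.Confined K` collects the conditions under which all formulae of `D` belong to a
subformula-closed set `K`; the disjunction in `concl` is what makes them pass on to the
premisses. -/
structure Confined (D : Deriv v U) (K : Set (Formula S)) : Prop where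
  detourFree : D.DetourFree
  opens_mem : ∀ x ∈ D.opens, x.2 ∈ K
  concl : ∀ A, U = .fm A → A ∈ K ∨ A = .bot ∨ D.Neutral

namespace Confined

variable {D : Deriv v U} {K : Set (Formula S)}

theorem major (hD : D.Confined K) {T : Tree v} (hT : D.Major T) : T.2.Confined K where
  detourFree := hD.detourFree.of_mem_prems hT.mem_prems
  opens_mem x hx := hD.opens_mem x (hT.opens_subset hx)
  concl _ _ := .inr (.inr (hD.detourFree.neutral_of_major hT))

theorem prem (hD : D.Confined K) (hK : ∀ A, D.SubPrincipal A → A ∈ K) {T : Tree v}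
    (hT : T ∈ D.prems) : T.2.Confined K where
  detourFree := hD.detourFree.of_mem_prems hT
  opens_mem x hx := (mem_opens_or_subPrincipal hT hx).elim (hD.opens_mem x) (hK x.2)
  concl := by
    obtain ⟨_, E⟩ := T
    rintro A rfl
    rcases prem_cases hT with h_major | h_sub | ⟨-, h_bot⟩ | ⟨h_orEx, h_concl⟩
    · exact .inr (.inr (hD.detourFree.neutral_of_major h_major))
    · exact .inl (hK A h_sub)
    · exact .inr (.inl h_bot)
    · exact (hD.concl A h_concl).imp_right fun h => h.imp_right fun h => (h.2.2 h_orEx).elim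

theorem subPrincipal_mem (hD : D.Confined K) (hK : SubformulaClosed K)
    (h_major : ∀ (C : Formula S) (M : Deriv v (.fm C)), D.Major ⟨_, M⟩ → C ∈ K)
    {A : Formula S} (hA : D.SubPrincipal A) : A ∈ K := by
  cases hA with
  | elim hM hAC => exact hK hAC (h_major _ _ hM)
  | intro h_intro hAC =>
    rcases hD.concl _ rfl with hC | h_bot | h_neutral
    · exact hK hAC hC
    · exact (h_intro.ne_bot h_bot).elim
    · exact (h_neutral.1 h_intro).elim

theorem concl_mem {A : Formula S} {D : Deriv v (.fm A)} (hD : D.Confined K)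
    (hK : ∀ A, D.SubPrincipal A → A ∈ K)
    (h_prems : ∀ (C : Formula S) (E : Deriv v (.fm C)), ⟨_, E⟩ ∈ D.prems → C ∈ K) : A ∈ K := by
  rcases concl_cases D with ⟨u, hA⟩ | h_sub | ⟨h_bot, E, hE⟩ | ⟨-, E, hE⟩
  · exact hD.opens_mem _ hA
  · exact hK A h_sub
  · rcases hD.concl A rfl with hA | rfl | h_neutral
    · exact hA
    · exact h_prems _ E hE
    · exact (h_neutral.2.1 h_bot).elim
  · exact h_prems _ E hE

theorem occurs_mem (hD : D.Confined K) (hK : SubformulaClosed K) :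
    ∀ {B : Formula S}, D.Occurs (.fm B) → B ∈ K := by
  induction D using prems_induction with
  | step D ih =>
    have occurs_self {C : Formula S} (E : Deriv v (.fm C)) : E.Occurs (.fm C) :=
      occurs_iff.2 (.inl rfl)
    have h_sub (A : Formula S) : D.SubPrincipal A → A ∈ K :=
      hD.subPrincipal_mem hK fun _ M hM => ih _ hM.mem_prems (hD.major hM) (occurs_self M)
    have h_prems {T : Tree v} (hT : T ∈ D.prems) {B : Formula S} : T.2.Occurs (.fm B) → B ∈ K :=
      ih T hT (hD.prem h_sub hT)
    intro B hB
    rcases occurs_iff.1 hB with rfl | ⟨T, hT, hB⟩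
    · exact hD.concl_mem h_sub fun _ E hE => h_prems hE (occurs_self E)
    · exact h_prems hT hB

end Confined

end Deriv

end QDef

theorem subformula_property_general {S : QDef.Sig} {v : QDef.Base S} {Γ : Set (QDef.Formula S)}
    {U : QDef.Un S} {D : QDef.Deriv v U} (hΓ : ∀ x ∈ D.opens, x.2 ∈ Γ) (hD : D.DetourFree)
    {B : QDef.Formula S} (hB : D.Occurs (.fm B)) :
    ∃ C ∈ Γ ∪ {C | U = .fm C}, QDef.Subformula B C := by
  refine QDef.Deriv.Confined.occurs_mem ⟨hD, fun x hx => ?_, fun A hA => .inl ?_⟩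
    (QDef.subformulaClosed_subformulae (Γ ∪ {C | U = .fm C})) hB
  · exact ⟨x.2, .inl (hΓ x hx), .refl _⟩
  · exact ⟨A, .inr hA, .refl A⟩

theorem subformula_property {S : QDef.Sig} (v : QDef.Base S) (Γ : Set (QDef.Formula S))
    (A : QDef.Formula S) (D : QDef.Deriv v (.fm A)) (hD : D.IsFrom Γ) (hN : D.Normal)
    (B : QDef.Formula S) (hB : D.Occurs (.fm B)) :
    ∃ C ∈ Γ ∪ {A}, QDef.Subformula B C := by
  simpa [eq_comm] using subformula_property_general hD.2 hN.detourFree hB
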